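/- Let E be a finite-dimensional real vector space, w : E → E a C^∞ vector field with w(z) = 0 at a point z ∈ E, and ε ∈ {1, −1}. Suppose there exists a (Euclidean) inner product ⟨·,·⟩ on E such that the bilinear form (u, u') ↦ ⟨ε·Dw(z)u, u'⟩ is negative definite, where Dw(z) is the derivative of w at z. Then every neighborhood of z contains an open neighborhood U of z with the following property: whenever x : (a₋, a₊) → E is a maximal integral curve of w (with −∞ ≤ a₋ < a₊ ≤ ∞) and t' ∈ (a₋, a₊) satisfies x(t') ∈ U, then a₊ = ∞ if ε = 1 (respectively a₋ = −∞ if ε = −1), and x(t) ∈ U for every t in the domain with ε·(t − t') ≥ 0. -/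

import Mathlib

/-!
For a small sublevel `φ < r` of the Lyapunov function `φ y = B (y - z) (y - z)`, negative
definiteness of `B (Dw(z) ·) ·` makes `φ` strictly decrease along `w` away from `z`. A curve
therefore cannot cross a level `φ = q` with `0 < q < r` outwards, so it remains in the closed
sublevel `φ ≤ q`. There `w` is bounded, so at a finite end time the curve would be Lipschitz, hence
convergent, and could be continued by a local solution through its limit: maximality forces the end
time to be infinite. The case `ε = -1` follows by reversing time.
-/

open Filter Set Topology
open scoped Pointwise

section Definitions

variable {E : Type*} [NormedAddCommGroup E] [NormedSpace ℝ E]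

/-- The open interval of real times with extended real endpoints `a` and `b`. -/
def realIoo (a b : EReal) : Set ℝ :=
  (↑) ⁻¹' Ioo a b

/-- `x` is a maximal integral curve of the autonomous vector field `w` with domain `(a, b)`. The
values of the total function `x` outside `(a, b)` are irrelevant, so an extension is a curve on a
larger interval that agrees with `x` on `(a, b)`. -/
structure IsMaximalIntegralCurve (x : ℝ → E) (w : E → E) (a b : EReal) : Prop where
  isIntegralCurveOn : IsIntegralCurveOn x (fun _ ↦ w) (realIoo a b)
  eq_of_extends : ∀ (a' b' : EReal) (y : ℝ → E), a' ≤ a → b ≤ b' →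
    IsIntegralCurveOn y (fun _ ↦ w) (realIoo a' b') → EqOn y x (realIoo a b) → a' = a ∧ b' = b

/-- A set in which every maximal integral curve of `w` that meets it stays from then on, for all
future times. -/
def IsForwardTrap (w : E → E) (U : Set E) : Prop :=
  ∀ ⦃a b : EReal⦄ ⦃x : ℝ → E⦄, IsMaximalIntegralCurve x w a b →
    ∀ t' ∈ realIoo a b, x t' ∈ U → b = ⊤ ∧ ∀ t ∈ realIoo a b, t' ≤ t → x t ∈ U

end Definitions

section RealIoo

theorem isOpen_realIoo (a b : EReal) : IsOpen (realIoo a b) :=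
  isOpen_Ioo.preimage continuous_coe_real_ereal

theorem ordConnected_realIoo (a b : EReal) : OrdConnected (realIoo a b) :=
  ordConnected_Ioo.preimage_mono EReal.coe_strictMono.monotone

theorem neg_realIoo (a b : EReal) : -realIoo a b = realIoo (-b) (-a) := by
  ext t
  change a < ((-t : ℝ) : EReal) ∧ ((-t : ℝ) : EReal) < b ↔ -b < (t : EReal) ∧ (t : EReal) < -a
  rw [EReal.coe_neg, EReal.lt_neg_comm, EReal.neg_lt_comm (b := b), and_comm]

theorem neg_mem_realIoo_iff {a b : EReal} {t : ℝ} : -t ∈ realIoo (-b) (-a) ↔ t ∈ realIoo a b := by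
  rw [← neg_realIoo, Set.neg_mem_neg]

end RealIoo

section IntegralCurves

variable {E : Type*} [NormedAddCommGroup E] [NormedSpace ℝ E] {x γ : ℝ → E} {w : E → E}
  {s : Set ℝ} {a b : EReal} {t₀ β : ℝ}

theorem isIntegralCurveOn_iff_hasDerivAt {v : ℝ → E → E} (hs : IsOpen s) :
    IsIntegralCurveOn x v s ↔ ∀ t ∈ s, HasDerivAt x (v t (x t)) t :=
  forall₂_congr fun _ ht ↦ ⟨fun h ↦ h.hasDerivAt (hs.mem_nhds ht), fun h ↦ h.hasDerivWithinAt⟩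

theorem isMaximalIntegralCurve_iff_hasDerivAt :
    IsMaximalIntegralCurve x w a b ↔
      (∀ t : ℝ, a < t → t < b → HasDerivAt x (w (x t)) t) ∧
      ∀ (a' b' : EReal) (y : ℝ → E), a' ≤ a → b ≤ b' →
        (∀ t : ℝ, a' < t → t < b' → HasDerivAt y (w (y t)) t) →
        (∀ t : ℝ, a < t → t < b → y t = x t) → a' = a ∧ b' = b := by
  have hcurve (a b : EReal) (y : ℝ → E) : IsIntegralCurveOn y (fun _ ↦ w) (realIoo a b) ↔
      ∀ t : ℝ, a < t → t < b → HasDerivAt y (w (y t)) t :=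
    (isIntegralCurveOn_iff_hasDerivAt (isOpen_realIoo a b)).trans (forall_congr' fun _ ↦ and_imp)
  have heqOn (y : ℝ → E) : EqOn y x (realIoo a b) ↔ ∀ t : ℝ, a < t → t < b → y t = x t :=
    forall_congr' fun _ ↦ and_imp
  constructor <;> rintro ⟨hx, hmax⟩
  · simp only [hcurve, heqOn] at hx hmax
    exact ⟨hx, hmax⟩
  · constructor <;> simpa only [hcurve, heqOn]

theorem isIntegralCurveOn_comp_neg (hx : IsIntegralCurveOn x (fun _ ↦ w) s) :
    IsIntegralCurveOn (fun t ↦ x (-t)) (fun _ ↦ -w) (-s) := by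
  convert! hx.comp_mul (-1) using 1
  · ext t; simp
  · ext t y; simp
  · ext t; simp

theorem IsMaximalIntegralCurve.comp_neg (hx : IsMaximalIntegralCurve x w a b) :
    IsMaximalIntegralCurve (fun t ↦ x (-t)) (-w) (-b) (-a) where
  isIntegralCurveOn := neg_realIoo a b ▸ isIntegralCurveOn_comp_neg hx.isIntegralCurveOn
  eq_of_extends a' b' y ha hb hy hyx := by
    have hy_neg := isIntegralCurveOn_comp_neg hy
    rw [neg_realIoo, neg_neg] at hy_neg
    have hyx_neg : EqOn (fun t ↦ y (-t)) x (realIoo a b) := fun t ht ↦ by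
      simpa only [neg_neg] using hyx (neg_mem_realIoo_iff.2 ht)
    obtain ⟨rfl, rfl⟩ := hx.eq_of_extends (-b') (-a') _ (EReal.neg_le_of_neg_le hb)
      (EReal.le_neg_of_le_neg ha) hy_neg hyx_neg
    simp only [neg_neg, and_self]

theorem exists_tendsto_nhdsLT_of_norm_le [CompleteSpace E] {C : ℝ} (hβ : t₀ < β)
    (hx : IsIntegralCurveOn x (fun _ ↦ w) (Ico t₀ β)) (hC : ∀ t ∈ Ico t₀ β, ‖w (x t)‖ ≤ C) :
    ∃ p, Tendsto x (𝓝[<] β) (𝓝 p) := by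
  have hlip : LipschitzOnWith C.toNNReal x (Ico t₀ β) :=
    (convex_Ico t₀ β).lipschitzOnWith_of_nnnorm_hasDerivWithin_le hx fun t ht ↦
      NNReal.coe_le_coe.1 ((hC t ht).trans C.le_coe_toNNReal)
  have hcauchy : Cauchy (map x (𝓝[<] β)) :=
    (cauchy_nhds.mono nhdsWithin_le_nhds).map_of_le hlip.uniformContinuousOn
      (le_principal_iff.2 (Ico_mem_nhdsLT hβ))
  exact CompleteSpace.complete hcauchy

theorem hasDerivWithinAt_Iic_of_tendsto (hx : ∀ᶠ t in 𝓝[<] β, HasDerivAt x (w (x t)) t)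
    (hlim : Tendsto x (𝓝[<] β) (𝓝 (x β))) (hw : ContinuousAt w (x β)) :
    HasDerivWithinAt x (w (x β)) (Iic β) β := by
  have hdiff : DifferentiableOn ℝ x ({t | HasDerivAt x (w (x t)) t} ∩ Iio β) :=
    fun t ht ↦ ht.1.differentiableAt.differentiableWithinAt
  have hderiv : Tendsto (deriv x) (𝓝[<] β) (𝓝 (w (x β))) :=
    (hw.tendsto.comp hlim).congr' (hx.mono fun t ht ↦ ht.deriv.symm)
  exact hasDerivWithinAt_Iic_of_tendsto_deriv hdiff
    (hlim.mono_left (nhdsWithin_mono β inter_subset_right)) (inter_mem hx self_mem_nhdsWithin)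
    hderiv

/-- At `β` both one-sided derivatives equal `w (γ β)`, the left one as the limit of `x' = w ∘ x`. -/
theorem isIntegralCurveOn_piecewise_Iio (hs : IsOpen s)
    (hx : IsIntegralCurveOn x (fun _ ↦ w) (s ∩ Iio β))
    (hγ : IsIntegralCurveOn γ (fun _ ↦ w) (s ∩ Ici β))
    (hlim : Tendsto x (𝓝[<] β) (𝓝 (γ β))) (hw : ContinuousAt w (γ β)) :
    IsIntegralCurveOn ((Iio β).piecewise x γ) (fun _ ↦ w) s := by
  set y := (Iio β).piecewise x γ
  have hyx : EqOn y x (Iio β) := piecewise_eqOn _ _ _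
  have hyγ : EqOn y γ (Ici β) := compl_Iio (a := β) ▸ piecewise_eqOn_compl _ _ _
  have hy_left : ∀ t ∈ s ∩ Iio β, HasDerivAt y (w (y t)) t := fun t ht ↦ by
    have hxt := (isIntegralCurveOn_iff_hasDerivAt (hs.inter isOpen_Iio)).1 hx t ht
    rw [hyx ht.2]
    exact hxt.congr_of_eventuallyEq (hyx.eventuallyEq_of_mem (Iio_mem_nhds ht.2))
  have hy_right : IsIntegralCurveOn y (fun _ ↦ w) (s ∩ Ici β) := fun t ht ↦ by
    rw [hyγ ht.2]
    exact (hγ t ht).congr (fun u hu ↦ hyγ hu.2) (hyγ ht.2)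
  intro t ht
  obtain htβ | rfl | hβt := lt_trichotomy t β
  · exact (hy_left t ⟨ht, htβ⟩).hasDerivWithinAt
  · have hyt : y t = γ t := hyγ self_mem_Ici
    have hleft : HasDerivWithinAt y (w (y t)) (Iic t) t := by
      refine hasDerivWithinAt_Iic_of_tendsto ?_ ?_ (hyt ▸ hw)
      · filter_upwards [inter_mem_nhdsWithin (Iio t) (hs.mem_nhds ht)] with u hu
        exact hy_left u hu.symm
      · exact hyt ▸ hlim.congr' (hyx.symm.eventuallyEq_of_mem self_mem_nhdsWithin)
    refine (hleft.union (hy_right t ⟨ht, self_mem_Ici⟩)).mono fun u hu ↦ ?_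
    exact (le_total u t).imp id fun htu ↦ ⟨hu, htu⟩
  · exact (hy_right t ⟨ht, hβt.le⟩).mono_of_mem_nhdsWithin
      (inter_mem self_mem_nhdsWithin (mem_nhdsWithin_of_mem_nhds (Ici_mem_nhds hβt)))

theorem IsMaximalIntegralCurve.not_tendsto_nhdsLT [CompleteSpace E] {p : E}
    (hx : IsMaximalIntegralCurve x w a β) (hw : ContDiffAt ℝ 1 w p) :
    ¬Tendsto x (𝓝[<] β) (𝓝 p) := by
  intro hlim
  obtain ⟨γ, rfl, δ, hδ, hγ⟩ :=
    hw.exists_forall_mem_closedBall_exists_eq_forall_mem_Ioo_hasDerivAt₀ β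
  have hx_left : IsIntegralCurveOn x (fun _ ↦ w) (realIoo a ↑(β + δ) ∩ Iio β) :=
    hx.isIntegralCurveOn.mono fun t ht ↦ ⟨ht.1.1, EReal.coe_lt_coe ht.2⟩
  have hγ_right : IsIntegralCurveOn γ (fun _ ↦ w) (realIoo a ↑(β + δ) ∩ Ici β) := fun t ht ↦
    (hγ t ⟨(sub_lt_self β hδ).trans_le ht.2, EReal.coe_lt_coe_iff.1 ht.1.2⟩).hasDerivWithinAt
  have hglued := isIntegralCurveOn_piecewise_Iio (isOpen_realIoo _ _) hx_left hγ_right hlim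
    hw.continuousAt
  have hend : ((β + δ : ℝ) : EReal) = β :=
    (hx.eq_of_extends a _ _ le_rfl (EReal.coe_le_coe (le_add_of_nonneg_right hδ.le)) hglued
      fun t ht ↦ piecewise_eq_of_mem _ _ _ (EReal.coe_lt_coe_iff.1 ht.2)).2
  exact (lt_add_of_pos_right β hδ).ne' (EReal.coe_injective hend)

theorem IsMaximalIntegralCurve.eq_top_of_isClosed [CompleteSpace E] {K : Set E} {C : ℝ}
    (hx : IsMaximalIntegralCurve x w a b) (hK : IsClosed K) (hw : ∀ p ∈ K, ContDiffAt ℝ 1 w p)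
    (hC : ∀ p ∈ K, ‖w p‖ ≤ C) (ht₀ : t₀ ∈ realIoo a b)
    (hxK : ∀ t ∈ realIoo a b, t₀ ≤ t → x t ∈ K) : b = ⊤ := by
  induction b with
  | bot => exact absurd ht₀.2 not_lt_bot
  | top => rfl
  | coe β =>
    have hβ : t₀ < β := EReal.coe_lt_coe_iff.1 ht₀.2
    have hsub : Ico t₀ β ⊆ realIoo a β := fun t ht ↦
      ⟨ht₀.1.trans_le (EReal.coe_le_coe ht.1), EReal.coe_lt_coe ht.2⟩
    have hmem : ∀ t ∈ Ico t₀ β, x t ∈ K := fun t ht ↦ hxK t (hsub ht) ht.1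
    obtain ⟨p, hp⟩ := exists_tendsto_nhdsLT_of_norm_le hβ (hx.isIntegralCurveOn.mono hsub)
      fun t ht ↦ hC _ (hmem t ht)
    have hpK : p ∈ K := hK.mem_of_tendsto hp (eventually_of_mem (Ico_mem_nhdsLT hβ) hmem)
    exact absurd hp (hx.not_tendsto_nhdsLT (hw p hpK))

end IntegralCurves

section Trapping

variable {E : Type*} [NormedAddCommGroup E] [NormedSpace ℝ E] {w : E → E} {φ : E → ℝ}

theorem le_of_fderiv_neg_of_eq {x : ℝ → E} {s t q : ℝ}
    (hx : IsIntegralCurveOn x (fun _ ↦ w) (Icc s t)) (hst : s ≤ t) (hφ : Differentiable ℝ φ)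
    (hneg : ∀ y, φ y = q → fderiv ℝ φ y (w y) < 0) (hs : φ (x s) ≤ q) : φ (x t) ≤ q := by
  have hderiv : ∀ u ∈ Icc s t,
      HasDerivWithinAt (φ ∘ x) (fderiv ℝ φ (x u) (w (x u))) (Icc s t) u := fun u hu ↦
    (hφ (x u)).hasFDerivAt.comp_hasDerivWithinAt u (hx u hu)
  exact image_le_of_deriv_right_lt_deriv_boundary (B := fun _ ↦ q) (B' := fun _ ↦ 0)
    (fun u hu ↦ (hderiv u hu).continuousWithinAt)
    (fun u hu ↦ (hderiv u (Ico_subset_Icc_self hu)).mono_of_mem_nhdsWithin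
      (Icc_mem_nhdsGE_of_mem hu))
    hs (fun u ↦ hasDerivAt_const u q) (fun u _ hu ↦ hneg (x u) hu) (right_mem_Icc.2 hst)

theorem isForwardTrap_setOf_le [CompleteSpace E] {q C : ℝ} (hφ : Differentiable ℝ φ)
    (hw : ∀ y, φ y ≤ q → ContDiffAt ℝ 1 w y) (hC : ∀ y, φ y ≤ q → ‖w y‖ ≤ C)
    (hneg : ∀ y, φ y = q → fderiv ℝ φ y (w y) < 0) : IsForwardTrap w {y | φ y ≤ q} := by
  intro a b x hx t' ht' hxt'
  have hstay : ∀ t ∈ realIoo a b, t' ≤ t → φ (x t) ≤ q := fun t ht htt' ↦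
    le_of_fderiv_neg_of_eq (hx.isIntegralCurveOn.mono ((ordConnected_realIoo a b).out ht' ht))
      htt' hφ hneg hxt'
  exact ⟨hx.eq_top_of_isClosed (isClosed_le hφ.continuous continuous_const) hw hC ht' hstay, hstay⟩

theorem isForwardTrap_setOf_lt {m r : ℝ} (hmr : m < r)
    (h : ∀ q ∈ Ioo m r, IsForwardTrap w {y | φ y ≤ q}) : IsForwardTrap w {y | φ y < r} := by
  intro a b x hx t' ht' hxt'
  obtain ⟨q, hq, hqr⟩ := exists_between (max_lt hxt' hmr)
  obtain ⟨hxq, hmq⟩ := max_lt_iff.1 hq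
  obtain ⟨hb, hstay⟩ := h q ⟨hmq, hqr⟩ hx t' ht' hxq.le
  exact ⟨hb, fun t ht htt' ↦ (hstay t ht htt').trans_lt hqr⟩

end Trapping

section CoerciveForms

variable {E : Type*} [NormedAddCommGroup E] [NormedSpace ℝ E] {L : E →L[ℝ] E →L[ℝ] ℝ}

theorem isCoercive_of_forall_pos [FiniteDimensional ℝ E] (hL : ∀ u, u ≠ 0 → 0 < L u u) :
    IsCoercive L := by
  have : ProperSpace E := FiniteDimensional.proper ℝ E
  obtain ⟨c, hc, hsphere⟩ := (isCompact_sphere (0 : E) 1).exists_forall_le' (f := fun u ↦ L u u)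
    (by fun_prop) (a := 0) fun u hu ↦ hL u (ne_zero_of_mem_unit_sphere ⟨u, hu⟩)
  refine ⟨c, hc, fun u ↦ ?_⟩
  obtain rfl | hu := eq_or_ne u 0
  · simp
  have hu_norm : ‖u‖ ≠ 0 := norm_ne_zero_iff.2 hu
  have hunit : c ≤ L (‖u‖⁻¹ • u) (‖u‖⁻¹ • u) := hsphere _ (by simp [norm_smul, hu_norm])
  calc c * ‖u‖ * ‖u‖ ≤ L (‖u‖⁻¹ • u) (‖u‖⁻¹ • u) * ‖u‖ * ‖u‖ := by gcongr
    _ = L u u := by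
      simp only [map_smul, smul_apply, smul_eq_mul]
      field_simp

theorem exists_setOf_apply_sub_lt_subset (hL : IsCoercive L) {z : E} {S : Set E} (hS : S ∈ 𝓝 z) :
    ∃ r > 0, {y | L (y - z) (y - z) < r} ⊆ S := by
  obtain ⟨c, hc, hcL⟩ := hL
  obtain ⟨d, hd, hdS⟩ := Metric.mem_nhds_iff.1 hS
  refine ⟨c * d * d, by positivity, fun y hy ↦ hdS ?_⟩
  rw [mem_ball_iff_norm]
  by_contra! hdy
  have : c * d * d ≤ c * ‖y - z‖ * ‖y - z‖ := by gcongr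
  exact (this.trans (hcL _)).not_gt hy

theorem fderiv_apply_sub_self (hsymm : ∀ u v, L u v = L v u) (z y v : E) :
    fderiv ℝ (fun y ↦ L (y - z) (y - z)) y v = 2 * L v (y - z) := by
  have hsub : HasFDerivAt (fun y ↦ y - z) (.id ℝ E) y := (hasFDerivAt_id y).sub_const z
  rw [(L.hasFDerivAt_of_bilinear hsub hsub).fderiv]
  change L (y - z) v + L v (y - z) = _
  rw [hsymm (y - z) v, two_mul]

/-- The linear part contributes `-c * ‖y - z‖ ^ 2` and dominates the remainder
`w y - A (y - z) = o(y - z)`. -/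
theorem eventually_apply_sub_neg {w : E → E} {z : E} {A : E →L[ℝ] E} (hw : HasFDerivAt w A z)
    (hz : w z = 0) (hneg : IsCoercive (-(L ∘L A))) : ∀ᶠ y in 𝓝 z, y ≠ z → L (w y) (y - z) < 0 := by
  obtain ⟨c, hc, hcL⟩ := hneg
  have hrem : (fun y ↦ L (w y - A (y - z))) =o[𝓝 z] fun y ↦ y - z :=
    (L.isBigO_comp _ _).trans_isLittleO (by simpa [hz] using hw.isLittleO)
  filter_upwards [hrem.def (half_pos hc)] with y hy hyz
  have hpos : 0 < ‖y - z‖ := norm_pos_iff.2 (sub_ne_zero.2 hyz)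
  have hlin : L (A (y - z)) (y - z) ≤ -(c * ‖y - z‖ * ‖y - z‖) := le_neg_of_le_neg (hcL (y - z))
  have hrem_le : L (w y - A (y - z)) (y - z) ≤ c / 2 * ‖y - z‖ * ‖y - z‖ :=
    (Real.le_norm_self _).trans ((L _).le_of_opNorm_le hy _)
  calc L (w y) (y - z) = L (A (y - z)) (y - z) + L (w y - A (y - z)) (y - z) := by simp
    _ ≤ -(c * ‖y - z‖ * ‖y - z‖) + c / 2 * ‖y - z‖ * ‖y - z‖ := add_le_add hlin hrem_le
    _ = -(c / 2 * ‖y - z‖ * ‖y - z‖) := by ring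
    _ < 0 := neg_lt_zero.2 (by positivity)

end CoerciveForms

theorem exists_isOpen_isForwardTrap {E : Type*} [NormedAddCommGroup E] [NormedSpace ℝ E]
    [CompleteSpace E] {w : E → E} {z : E} {A : E →L[ℝ] E} (hw : ContDiffAt ℝ 1 w z)
    (hA : HasFDerivAt w A z) (hz : w z = 0) {L : E →L[ℝ] E →L[ℝ] ℝ}
    (hsymm : ∀ u v, L u v = L v u) (hL : IsCoercive L) (hneg : IsCoercive (-(L ∘L A)))
    {V : Set E} (hV : V ∈ 𝓝 z) : ∃ U ⊆ V, IsOpen U ∧ z ∈ U ∧ IsForwardTrap w U := by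
  have hw_norm : ∀ᶠ y in 𝓝 z, ‖w y‖ ≤ 1 :=
    (hw.continuousAt.norm.eventually_lt_const (by simp [hz])).mono fun _ ↦ le_of_lt
  obtain ⟨r, hr, hsub⟩ := exists_setOf_apply_sub_lt_subset hL (inter_mem hV
    ((hw.eventually (by simp)).and (hw_norm.and (eventually_apply_sub_neg hA hz hneg))))
  have hdiff : Differentiable ℝ fun y ↦ L (y - z) (y - z) := by fun_prop
  refine ⟨{y | L (y - z) (y - z) < r}, fun y hy ↦ (hsub hy).1,
    isOpen_lt hdiff.continuous continuous_const, by simpa using hr, ?_⟩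
  refine isForwardTrap_setOf_lt hr fun q ⟨hq, hqr⟩ ↦ isForwardTrap_setOf_le hdiff
    (fun y hy ↦ (hsub (hy.trans_lt hqr)).2.1) (fun y hy ↦ (hsub (hy.trans_lt hqr)).2.2.1)
    fun y hy ↦ ?_
  have hyz : y ≠ z := by
    rintro rfl
    simp [hq.ne] at hy
  rw [fderiv_apply_sub_self hsymm]
  linarith [(hsub (hy.trans_lt hqr)).2.2.2 hyz]

theorem stmt_3_general {E : Type*} [NormedAddCommGroup E] [NormedSpace ℝ E] [CompleteSpace E]
    {w : E → E} {z : E} (hw : ContDiffAt ℝ 1 w z) (hz : w z = 0) {ε : ℝ} (hε : ε = 1 ∨ ε = -1)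
    {L : E →L[ℝ] E →L[ℝ] ℝ} (hsymm : ∀ u v, L u v = L v u) (hL : IsCoercive L)
    (hneg : IsCoercive (-(L ∘L (ε • fderiv ℝ w z)))) :
    ∀ V ∈ 𝓝 z, ∃ U ⊆ V, IsOpen U ∧ z ∈ U ∧
      ∀ (a b : EReal) (x : ℝ → E), IsMaximalIntegralCurve x w a b →
        ∀ t' ∈ realIoo a b, x t' ∈ U → (ε = 1 → b = ⊤) ∧ (ε = -1 → a = ⊥) ∧
          ∀ t ∈ realIoo a b, 0 ≤ ε * (t - t') → x t ∈ U := by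
  intro V hV
  have hA := (hw.differentiableAt one_ne_zero).hasFDerivAt.const_smul ε
  obtain ⟨U, hUV, hUo, hzU, htrap⟩ := exists_isOpen_isForwardTrap (w := ε • w)
    (hw.const_smul ε) hA (by simp [hz]) hsymm hL hneg hV
  refine ⟨U, hUV, hUo, hzU, fun a b x hx t' ht' hxt' ↦ ?_⟩
  obtain rfl | rfl := hε
  · rw [one_smul] at htrap
    obtain ⟨hb, hstay⟩ := htrap hx t' ht' hxt'
    exact ⟨fun _ ↦ hb, by norm_num, fun t ht htt' ↦ hstay t ht (by linarith)⟩
  · rw [neg_one_smul] at htrap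
    obtain ⟨ha, hstay⟩ := htrap hx.comp_neg (-t') (neg_mem_realIoo_iff.2 ht') (by rwa [neg_neg])
    refine ⟨by norm_num, fun _ ↦ EReal.neg_eq_top_iff.1 ha, fun t ht htt' ↦ ?_⟩
    simpa only [neg_neg] using hstay (-t) (neg_mem_realIoo_iff.2 ht) (by linarith)

/-- If `w` is a smooth vector field with `w z = 0` and, for some
sign `ε` and some Euclidean inner product `B` on `E`, the bilinear form
`(u, u') ↦ B (ε • Dw(z) u) u'` is negative definite, then arbitrarily small
open neighborhoods `U` of `z` trap, forward (if `ε = 1`) or backward (if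
`ε = -1`) in time, every maximal integral curve of `w` that meets `U`. -/
theorem stmt_3 {E : Type*} [NormedAddCommGroup E] [NormedSpace ℝ E]
    [FiniteDimensional ℝ E]
    (w : E → E) (hw : ContDiff ℝ (⊤ : ℕ∞) w) (z : E) (hz : w z = 0)
    (ε : ℝ) (hε : ε = 1 ∨ ε = -1)
    (B : E →ₗ[ℝ] E →ₗ[ℝ] ℝ)
    (hBsymm : ∀ u u' : E, B u u' = B u' u)
    (hBpos : ∀ u : E, u ≠ 0 → 0 < B u u)
    (hneg : ∀ u : E, u ≠ 0 → B (ε • fderiv ℝ w z u) u < 0) :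
    ∀ V ∈ nhds z, ∃ U : Set E, U ⊆ V ∧ IsOpen U ∧ z ∈ U ∧
      ∀ (a b : EReal) (x : ℝ → E), a < b →
        (∀ t : ℝ, a < (t : EReal) → (t : EReal) < b → HasDerivAt x (w (x t)) t) →
        (∀ (a' b' : EReal) (y : ℝ → E), a' ≤ a → b ≤ b' →
          (∀ t : ℝ, a' < (t : EReal) → (t : EReal) < b' → HasDerivAt y (w (y t)) t) →
          (∀ t : ℝ, a < (t : EReal) → (t : EReal) < b → y t = x t) →
          a' = a ∧ b' = b) →
        ∀ t' : ℝ, a < (t' : EReal) → (t' : EReal) < b → x t' ∈ U →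
          (ε = 1 → b = ⊤) ∧ (ε = -1 → a = ⊥) ∧
          ∀ t : ℝ, a < (t : EReal) → (t : EReal) < b → 0 ≤ ε * (t - t') → x t ∈ U := by
  intro V hV
  obtain ⟨U, hUV, hUo, hzU, hU⟩ := stmt_3_general ((hw.of_le (by simp)).contDiffAt) hz hε
    (L := B.toContinuousBilinearMap) hBsymm (isCoercive_of_forall_pos hBpos)
    (isCoercive_of_forall_pos fun u hu ↦ by simpa using hneg u hu) V hV
  refine ⟨U, hUV, hUo, hzU, fun a b x _ hx hmax t' ha hb hxt' ↦ ?_⟩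
  simpa only [realIoo, mem_preimage, mem_Ioo, and_imp] using
    hU a b x (isMaximalIntegralCurve_iff_hasDerivAt.2 ⟨hx, hmax⟩) t' ⟨ha, hb⟩ hxt'
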